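/- arXiv:1209.0084 — 2 statements merged into one kernel-verified Lean document; each statement's English description precedes it below -/
import Mathlib

section
/- Let M be a finitely generated ℤⁿ-graded R-module, let R' = R ⊗_K K[X_{n+1},…,X_{n+m}] and M' = M ⊗_K K[X_{n+1},…,X_{n+m}]. Then Hdepth_{R'} M' = Hdepth_R M + m. -/
open MvPolynomial TensorProduct

noncomputable section

/-- The inclusion `R = K[X₁,…,Xₙ] → R' = K[X₁,…,X_{n+m}]`, `Xᵢ ↦ Xᵢ`. -/
def polyIncl (K : Type*) [Field K] (n m : ℕ) :
    MvPolynomial (Fin n) K →+* MvPolynomial (Fin (n + m)) K :=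
  (MvPolynomial.rename (Fin.castAdd m)).toRingHom

/-- `R'` as an `R`-algebra via the inclusion. -/
instance polyInclAlgebra (K : Type*) [Field K] (n m : ℕ) :
    Algebra (MvPolynomial (Fin n) K) (MvPolynomial (Fin (n + m)) K) :=
  (polyIncl K n m).toAlgebra

instance polyInclSMulComm (K : Type*) [Field K] (n m : ℕ) :
    SMulCommClass (MvPolynomial (Fin n) K) K (MvPolynomial (Fin (n + m)) K) :=
  ⟨fun r k x => by
    simp only [Algebra.smul_def]
    ring⟩

/-- `M' = M ⊗_K K[X_{n+1},…,X_{n+m}] = R' ⊗_R M`, the scalar extension of `M`. -/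
abbrev scalarExt (K : Type*) [Field K] (n m : ℕ) (M : Type*) [AddCommGroup M]
    [Module (MvPolynomial (Fin n) K) M] :=
  TensorProduct (MvPolynomial (Fin n) K) (MvPolynomial (Fin (n + m)) K) M

/-- The `ℤ^{n+m}`-grading of the scalar extension `M' = R' ⊗_R M`:  the degree-`a'`
component is spanned by the tensors `X^t ⊗ x` with `x` homogeneous of some degree
`c ∈ ℤⁿ` and `(c,0) + t = a'`. -/
def extGrading (K : Type*) [Field K] (n m : ℕ) {M : Type*} [AddCommGroup M]
    [Module K M] [Module (MvPolynomial (Fin n) K) M]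
    (gr : (Fin n → ℤ) → Submodule K M) :
    (Fin (n + m) → ℤ) → Submodule K (scalarExt K n m M) := fun a' =>
  Submodule.span K
    {z | ∃ (t : Fin (n + m) →₀ ℕ) (c : Fin n → ℤ) (x : M), x ∈ gr c ∧
      (∀ j : Fin n, c j + (t (Fin.castAdd m j) : ℤ) = a' (Fin.castAdd m j)) ∧
      (∀ j : Fin m, (t (Fin.natAdd n j) : ℤ) = a' (Fin.natAdd n j)) ∧
      z = (MvPolynomial.monomial t (1 : K)) ⊗ₜ[MvPolynomial (Fin n) K] x}

/-- The grading is compatible with the module structure over the polynomial ring: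
multiplication by `Xᵢ` maps `N_a` into `N_{a+eᵢ}`. -/
def GradedSMul {K : Type*} [Field K] {ν : ℕ} {N : Type*} [AddCommGroup N]
    [Module K N] [Module (MvPolynomial (Fin ν) K) N]
    (gr : (Fin ν → ℤ) → Submodule K N) : Prop :=
  ∀ (i : Fin ν) (a : Fin ν → ℤ), ∀ x ∈ gr a,
    (MvPolynomial.X i : MvPolynomial (Fin ν) K) • x ∈ gr (a + Pi.single i 1)

/-- A Hilbert decomposition `N ≅ ⊕_{i∈I} K[Zᵢ](−sᵢ)` as multigraded `K`-vector
spaces: in each degree `c`, `dim_K N_c` equals the number of indices `i`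
with `sᵢ ⪯ c` and `c_j = (sᵢ)_j` for all `j ∉ Zᵢ`. -/
def IsHilbertDecomp {K : Type*} [Field K] {ν : ℕ} {N : Type*} [AddCommGroup N]
    [Module K N] (gr : (Fin ν → ℤ) → Submodule K N)
    {ι : Type*} [Fintype ι] (Z : ι → Finset (Fin ν)) (s : ι → Fin ν → ℤ) : Prop :=
  ∀ c : Fin ν → ℤ, Module.rank K ↥(gr c) =
    (((Finset.univ : Finset ι).filter
      fun i => (∀ j, s i j ≤ c j) ∧ (∀ j, j ∉ Z i → c j = s i j)).card : Cardinal)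

/-- The Hilbert depth: the maximum of the depths `min_i |Zᵢ|` over all Hilbert
decompositions (indexed by nonempty finite index sets `Fin (k+1)`). -/
def hdepth {K : Type*} [Field K] {ν : ℕ} {N : Type*} [AddCommGroup N]
    [Module K N] (gr : (Fin ν → ℤ) → Submodule K N) : ℕ :=
  sSup {d | ∃ (k : ℕ) (Z : Fin (k + 1) → Finset (Fin ν)) (s : Fin (k + 1) → Fin ν → ℤ),
    IsHilbertDecomp gr Z s ∧
      d = Finset.univ.inf' Finset.univ_nonempty fun i => (Z i).card}

/-- The multigraded `K`-vector subspace `x·K[Z] ⊆ N`. -/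
def stanleySpace (K : Type*) [Field K] {ν : ℕ} {N : Type*} [AddCommGroup N]
    [Module K N] [Module (MvPolynomial (Fin ν) K) N]
    (x : N) (Z : Finset (Fin ν)) : Submodule K N :=
  Submodule.span K
    ((fun t : Fin ν →₀ ℕ => (MvPolynomial.monomial t (1 : K)) • x) ''
      {t : Fin ν →₀ ℕ | ∀ j ∉ Z, t j = 0})

/-- A Stanley decomposition `N = ⊕_{i∈I} mᵢK[Zᵢ]`: the `mᵢ` are homogeneous of
degree `sᵢ`, `K[Zᵢ] ∩ Ann(mᵢ) = 0`, and `N` is the direct sum of the multigraded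
subspaces `mᵢK[Zᵢ]`. -/
def IsStanleyDecomp {K : Type*} [Field K] {ν : ℕ} {N : Type*} [AddCommGroup N]
    [Module K N] [Module (MvPolynomial (Fin ν) K) N]
    (gr : (Fin ν → ℤ) → Submodule K N)
    {ι : Type*} [Fintype ι] (Z : ι → Finset (Fin ν)) (s : ι → Fin ν → ℤ)
    (m : ι → N) : Prop :=
  (∀ i, m i ∈ gr (s i)) ∧
  (∀ i, ∀ q ∈ MvPolynomial.supported K (↑(Z i) : Set (Fin ν)), q • m i = 0 → q = 0) ∧
  (iSupIndep fun i => stanleySpace K (m i) (Z i)) ∧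
  (⨆ i, stanleySpace K (m i) (Z i)) = ⊤

/-- The Stanley depth: the maximum of the depths `min_i |Zᵢ|` over all Stanley
decompositions (indexed by nonempty finite index sets `Fin (k+1)`). -/
def stdepth {K : Type*} [Field K] {ν : ℕ} {N : Type*} [AddCommGroup N]
    [Module K N] [Module (MvPolynomial (Fin ν) K) N]
    (gr : (Fin ν → ℤ) → Submodule K N) : ℕ :=
  sSup {d | ∃ (k : ℕ) (Z : Fin (k + 1) → Finset (Fin ν)) (s : Fin (k + 1) → Fin ν → ℤ)
    (m : Fin (k + 1) → N), IsStanleyDecomp gr Z s m ∧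
      d = Finset.univ.inf' Finset.univ_nonempty fun i => (Z i).card}

section HilbertExistence

variable {K : Type*} [Field K] {n : ℕ} {M : Type*} [AddCommGroup M] [Module K M]
    [Module (MvPolynomial (Fin n) K) M] [IsScalarTower K (MvPolynomial (Fin n) K) M]

lemma mono_smul_eq (t : Fin n →₀ ℕ) (k : K) (x : M) :
    (monomial t k : MvPolynomial (Fin n) K) • x =
      k • ((monomial t (1 : K) : MvPolynomial (Fin n) K) • x) := by
  rw [← smul_assoc, smul_monomial, smul_eq_mul, mul_one]

lemma mono_smul_mem (gr : (Fin n → ℤ) → Submodule K M) (hsmul : GradedSMul gr)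
    (t : Fin n →₀ ℕ) : ∀ (a : Fin n → ℤ) (x : M), x ∈ gr a →
      (monomial t (1 : K) : MvPolynomial (Fin n) K) • x ∈ gr (a + fun j => (t j : ℤ)) := by
  induction t using Finsupp.induction_linear with
  | zero =>
    intro a x hx
    have : (a + fun j => (((0 : Fin n →₀ ℕ) j : ℕ) : ℤ)) = a := by ext; simp
    rw [this]
    have h1 : (monomial 0 (1 : K) : MvPolynomial (Fin n) K) = 1 := rfl
    rw [h1, one_smul]; exact hx
  | add f g hf hg =>
    intro a x hx
    have h := hf _ _ (hg a x hx)
    rw [← mul_smul, monomial_mul, one_mul] at h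
    have he : (a + fun j => (((f + g) j : ℕ) : ℤ)) =
        (a + fun j => (g j : ℤ)) + fun j => (f j : ℤ) := by
      funext j; simp; ring
    rw [he]; exact h
  | single i k =>
    induction k with
    | zero =>
      intro a x hx
      have : (a + fun j => (((Finsupp.single i 0 : Fin n →₀ ℕ) j : ℕ) : ℤ)) = a := by ext; simp
      rw [this, Finsupp.single_zero]
      have h1 : (monomial 0 (1 : K) : MvPolynomial (Fin n) K) = 1 := rfl
      rw [h1, one_smul]; exact hx
    | succ k ih =>
      intro a x hx
      have h := hsmul i _ _ (ih a x hx)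
      rw [X, ← mul_smul, monomial_mul, one_mul, ← Finsupp.single_add] at h
      convert h using 1
      · congr 1
        ext j
        by_cases hj : j = i
        · subst hj; simp; ring
        · simp [Finsupp.single_apply, Ne.symm hj, hj]
      · rw [add_comm]

/-- graded pieces of a submodule -/
def subGr (gr : (Fin n → ℤ) → Submodule K M) (N : Submodule (MvPolynomial (Fin n) K) M) :
    (Fin n → ℤ) → Submodule K M := fun c => gr c ⊓ N.restrictScalars K

lemma comp_smul (gr : (Fin n → ℤ) → Submodule K M) [DirectSum.Decomposition gr]
    (hsmul : GradedSMul gr) (a : Fin n → ℤ) (x : M) (hx : x ∈ gr a)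
    (c : Fin n → ℤ) (r : MvPolynomial (Fin n) K) :
    (DirectSum.decompose gr (r • x) c : M) ∈ Submodule.span K
      {z | ∃ t : Fin n →₀ ℕ, (a + fun j => (t j : ℤ)) = c ∧
        z = (monomial t (1 : K) : MvPolynomial (Fin n) K) • x} := by
  induction r using MvPolynomial.induction_on' with
  | monomial t k =>
    rw [mono_smul_eq, DirectSum.decompose_smul]
    have hm := mono_smul_mem gr hsmul t a x hx
    by_cases h : (a + fun j => (t j : ℤ)) = c
    · rw [h] at hm
      have := DirectSum.decompose_of_mem_same gr hm
      rw [DFinsupp.smul_apply, Submodule.coe_smul, this]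
      exact Submodule.smul_mem _ _ (Submodule.subset_span ⟨t, h, rfl⟩)
    · have := DirectSum.decompose_of_mem_ne gr hm h
      rw [DFinsupp.smul_apply, Submodule.coe_smul, this]
      simp
  | add p q hp hq =>
    rw [add_smul, DirectSum.decompose_add, DirectSum.add_apply, Submodule.coe_add]
    exact Submodule.add_mem _ hp hq

lemma rank_sup_span (N : Submodule K M) (y : M) (hy : y ∉ N) :
    Module.rank K ↥(N ⊔ Submodule.span K {y}) = Module.rank K N + 1 := by
  have h := Submodule.rank_sup_add_rank_inf_eq N (Submodule.span K {y})
  have hb : N ⊓ Submodule.span K {y} = ⊥ := by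
    rw [← disjoint_iff]
    have hy0 : y ≠ 0 := by rintro rfl; exact hy N.zero_mem
    exact (Submodule.disjoint_span_singleton' hy0).2 hy
  have hy0 : y ≠ 0 := by rintro rfl; exact hy N.zero_mem
  have h1 : Module.rank K (Submodule.span K {y}) = 1 := by
    have h2 := (LinearEquiv.toSpanNonzeroSingleton K M y hy0).lift_rank_eq
    rw [Module.rank_self, Cardinal.lift_one, eq_comm, Cardinal.lift_eq_one] at h2
    exact h2
  rw [hb, rank_bot, add_zero, h1] at h
  exact h

/-- the good submodules -/
def GoodSub (gr : (Fin n → ℤ) → Submodule K M) [DirectSum.Decomposition gr]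
    (N : Submodule (MvPolynomial (Fin n) K) M) : Prop :=
  (∀ y ∈ N, ∀ c, (DirectSum.decompose gr y c : M) ∈ N) ∧
  ∃ (k : ℕ) (Z : Fin k → Finset (Fin n)) (s : Fin k → Fin n → ℤ),
    IsHilbertDecomp (subGr gr N) Z s

lemma span_le_N (a c : Fin n → ℤ) (x : M)
    (N : Submodule (MvPolynomial (Fin n) K) M) (hx : x ∈ N) :
    Submodule.span K
      {z | ∃ t : Fin n →₀ ℕ, (a + fun j => (t j : ℤ)) = c ∧
        z = (monomial t (1 : K) : MvPolynomial (Fin n) K) • x} ≤ N.restrictScalars K := by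
  rw [Submodule.span_le]
  rintro _ ⟨t, -, rfl⟩
  exact N.smul_mem _ hx

lemma subGr_sup (gr : (Fin n → ℤ) → Submodule K M) [DirectSum.Decomposition gr]
    (hsmul : GradedSMul gr) (N : Submodule (MvPolynomial (Fin n) K) M)
    (hN : ∀ y ∈ N, ∀ c, (DirectSum.decompose gr y c : M) ∈ N)
    (a : Fin n → ℤ) (x : M) (hx : x ∈ gr a) (c : Fin n → ℤ) :
    subGr gr (N ⊔ Submodule.span _ {x}) c = subGr gr N c ⊔ Submodule.span K
      {z | ∃ t : Fin n →₀ ℕ, (a + fun j => (t j : ℤ)) = c ∧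
        z = (monomial t (1 : K) : MvPolynomial (Fin n) K) • x} := by
  apply le_antisymm
  · rintro y ⟨hyc, hyN⟩
    have hyN' : y ∈ N ⊔ Submodule.span _ {x} := hyN
    obtain ⟨u, hu, v, hv, rfl⟩ := Submodule.mem_sup.1 hyN'
    obtain ⟨r, rfl⟩ := Submodule.mem_span_singleton.1 hv
    have h := DirectSum.decompose_of_mem_same gr hyc
    rw [DirectSum.decompose_add, DirectSum.add_apply, Submodule.coe_add] at h
    rw [← h]
    refine Submodule.add_mem_sup ⟨SetLike.coe_mem _, hN u hu c⟩ (comp_smul gr hsmul a x hx c r)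
  · refine sup_le ?_ ?_
    · rintro y ⟨h1, h2⟩
      exact ⟨h1, Submodule.mem_sup_left (S := N) h2⟩
    · refine le_inf ?_ (span_le_N a c x _ (Submodule.mem_sup_right
        (Submodule.mem_span_singleton_self x)))
      rw [Submodule.span_le]
      rintro _ ⟨t, rfl, rfl⟩
      exact mono_smul_mem gr hsmul t a x hx

lemma goodSub_step (gr : (Fin n → ℤ) → Submodule K M) [DirectSum.Decomposition gr]
    (hsmul : GradedSMul gr) (N : Submodule (MvPolynomial (Fin n) K) M)
    (hN : GoodSub gr N) (hne : N ≠ ⊤) :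
    ∃ N', GoodSub gr N' ∧ N < N' := by
  classical
  -- the colon ideal
  let I : M → Ideal (MvPolynomial (Fin n) K) := fun x =>
    N.comap (LinearMap.toSpanSingleton (MvPolynomial (Fin n) K) M x)
  have hI : ∀ x r, r ∈ I x ↔ r • x ∈ N := fun x r => Iff.rfl
  let S : Set (Ideal (MvPolynomial (Fin n) K)) := {J | ∃ a x, x ∈ gr a ∧ x ∉ N ∧ J = I x}
  have hS : S.Nonempty := by
    by_contra hemp
    apply hne
    rw [eq_top_iff]
    intro y _
    rw [← DirectSum.sum_support_decompose gr y]
    refine N.sum_mem fun c _ => ?_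
    by_contra hc
    exact hemp ⟨_, c, _, SetLike.coe_mem _, hc, rfl⟩
  obtain ⟨J, ⟨a, x, hxa, hxN, rfl⟩, hmax⟩ := set_has_maximal_iff_noetherian.2
    (inferInstance : IsNoetherian (MvPolynomial (Fin n) K) (MvPolynomial (Fin n) K)) S hS
  let Z0 : Finset (Fin n) := Finset.univ.filter fun i => (X i : MvPolynomial (Fin n) K) • x ∉ N
  have hXI : ∀ i ∈ Z0, I ((X i : MvPolynomial (Fin n) K) • x) = I x := by
    intro i hi
    have hi' : (X i : MvPolynomial (Fin n) K) • x ∉ N := by simpa [Z0] using hi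
    have hle : I x ≤ I ((X i : MvPolynomial (Fin n) K) • x) := by
      intro r hr
      rw [hI] at hr ⊢
      rw [smul_comm]
      exact N.smul_mem _ hr
    by_contra hneq
    exact hmax _ ⟨_, _, hsmul i a x hxa, hi', rfl⟩ (lt_of_le_of_ne hle (Ne.symm hneq))
  have hXpow : ∀ i ∈ Z0, ∀ (k : ℕ) (r : MvPolynomial (Fin n) K),
      (X i ^ k * r) • x ∈ N → r • x ∈ N := by
    intro i hi k
    induction k with
    | zero => intro r h; simpa using h
    | succ k ih =>
      intro r h
      apply ih
      rw [← hI, ← hXI i hi, hI, ← mul_smul]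
      convert h using 2
      ring
  have hin : ∀ t : Fin n →₀ ℕ, (∀ j ∉ Z0, t j = 0) →
      (monomial t (1 : K) : MvPolynomial (Fin n) K) • x ∉ N := by
    intro t
    induction t using Finsupp.induction with
    | zero =>
      intro _ h
      apply hxN
      have h1 : (monomial 0 (1 : K) : MvPolynomial (Fin n) K) = 1 := rfl
      rwa [h1, one_smul] at h
    | single_add i k f hf hk ih =>
      intro ht h
      have hi : i ∈ Z0 := by
        by_contra hi
        have := ht i hi
        simp at this
        exact hk this.1
      refine ih (fun j hj => ?_) (hXpow i hi k _ ?_)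
      · have := ht j hj
        simp at this
        exact this.2
      · rwa [X_pow_eq_monomial, monomial_mul, one_mul]
  have hout : ∀ t : Fin n →₀ ℕ, (¬ ∀ j ∉ Z0, t j = 0) →
      (monomial t (1 : K) : MvPolynomial (Fin n) K) • x ∈ N := by
    intro t ht
    push Not at ht
    obtain ⟨j, hj, htj⟩ := ht
    have hj' : (X j : MvPolynomial (Fin n) K) • x ∈ N := by simpa [Z0] using hj
    have : t = (t - Finsupp.single j 1) + Finsupp.single j 1 := by
      rw [tsub_add_cancel_of_le]
      rw [Finsupp.single_le_iff]; omega
    rw [this, ← mul_one (1 : K), ← monomial_mul, mul_smul]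
    exact N.smul_mem _ hj'
  obtain ⟨hhom, k, Z, s, hd⟩ := hN
  refine ⟨N ⊔ Submodule.span _ {x}, ⟨?_, k + 1, Fin.cons Z0 Z, Fin.cons a s, ?_⟩, ?_⟩
  · intro y hy c
    obtain ⟨u, hu, v, hv, rfl⟩ := Submodule.mem_sup.1 hy
    obtain ⟨r, rfl⟩ := Submodule.mem_span_singleton.1 hv
    rw [DirectSum.decompose_add, DirectSum.add_apply, Submodule.coe_add]
    exact Submodule.add_mem _ (Submodule.mem_sup_left (hhom u hu c))
      (span_le_N a c x _ (Submodule.mem_sup_right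
        (Submodule.mem_span_singleton_self x)) (comp_smul gr hsmul a x hxa c r))
  · intro c
    rw [subGr_sup gr hsmul N hhom a x hxa c]
    have hc := hd c
    rw [Finset.card_filter] at hc ⊢
    rw [Fin.sum_univ_succ]
    simp only [Fin.cons_zero, Fin.cons_succ]
    rw [Nat.cast_add, ← hc]
    by_cases hP : (∀ j, a j ≤ c j) ∧ (∀ j, j ∉ Z0 → c j = a j)
    · rw [if_pos hP]
      let t : Fin n →₀ ℕ := Finsupp.equivFunOnFinite.symm fun j => (c j - a j).toNat
      have htj : ∀ j, (t j : ℤ) = c j - a j := by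
        intro j
        have := hP.1 j
        simp [t]
        omega
      have hset : {z | ∃ t : Fin n →₀ ℕ, (a + fun j => (t j : ℤ)) = c ∧
          z = (monomial t (1 : K) : MvPolynomial (Fin n) K) • x} =
          {(monomial t (1 : K) : MvPolynomial (Fin n) K) • x} := by
        ext z
        constructor
        · rintro ⟨t', ht', rfl⟩
          have : t' = t := by
            ext j
            have h1 := congrFun ht' j
            have h2 := htj j
            simp only [Pi.add_apply] at h1
            omega
          rw [this]; rfl
        · rintro rfl
          refine ⟨t, ?_, rfl⟩
          ext j
          simp only [Pi.add_apply, htj]; ring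
      rw [hset, rank_sup_span]
      · rw [Nat.cast_one, add_comm]
      · intro hmem
        refine hin t (fun j hj => ?_) hmem.2
        have h1 := htj j
        have h2 := hP.2 j hj
        omega
    · rw [if_neg hP, Nat.cast_zero, zero_add]
      refine congrArg (fun L : Submodule K M => Module.rank K L) ?_
      rw [sup_eq_left, Submodule.span_le]
      rintro _ ⟨t, rfl, rfl⟩
      refine ⟨mono_smul_mem gr hsmul t a x hxa, hout t fun h => hP ⟨?_, ?_⟩⟩
      · intro j; simp
      · intro j hj; simp [h j hj]
  · refine lt_of_le_of_ne le_sup_left fun h => hxN ?_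
    rw [h]
    exact Submodule.mem_sup_right (Submodule.mem_span_singleton_self x)

lemma exists_hilbert (gr : (Fin n → ℤ) → Submodule K M) [DirectSum.Decomposition gr]
    [Module.Finite (MvPolynomial (Fin n) K) M]
    (hsmul : GradedSMul gr) :
    ∃ (k : ℕ) (Z : Fin k → Finset (Fin n)) (s : Fin k → Fin n → ℤ),
    IsHilbertDecomp gr Z s := by
  have hnoeth : IsNoetherian (MvPolynomial (Fin n) K) M := inferInstance
  have hbot : GoodSub gr ⊥ := by
    refine ⟨?_, 0, Fin.elim0, Fin.elim0, ?_⟩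
    · intro y hy c
      rw [Submodule.mem_bot] at hy
      subst hy
      simp
    · intro c
      have : subGr gr ⊥ c = ⊥ := by simp [subGr]
      rw [this]
      simp
  obtain ⟨N, hN, hmax⟩ := set_has_maximal_iff_noetherian.2 hnoeth {N | GoodSub gr N} ⟨_, hbot⟩
  by_cases hne : N = ⊤
  · subst hne
    obtain ⟨-, k, Z, s, h⟩ := hN
    refine ⟨k, Z, s, ?_⟩
    have : subGr gr ⊤ = gr := by ext c y; simp [subGr]
    rwa [this] at h
  · obtain ⟨N', h1, h2⟩ := goodSub_step gr hsmul N hN hne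
    exact absurd h2 (hmax N' h1)

end HilbertExistence

section ExtRank

variable {K : Type*} [Field K] {n m : ℕ} {M : Type*} [AddCommGroup M] [Module K M]
    [Module (MvPolynomial (Fin n) K) M] [IsScalarTower K (MvPolynomial (Fin n) K) M]

/-- exponent supported on the new variables -/
def newExp (n : ℕ) {m : ℕ} (b : Fin m →₀ ℕ) : Fin (n + m) →₀ ℕ :=
  b.mapDomain (Fin.natAdd n)

lemma newExp_natAdd (b : Fin m →₀ ℕ) (j : Fin m) : newExp n b (Fin.natAdd n j) = b j :=
  Finsupp.mapDomain_apply (Fin.natAdd_injective m n) b j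

lemma newExp_castAdd (b : Fin m →₀ ℕ) (j : Fin n) : newExp n b (Fin.castAdd m j) = 0 := by
  apply Finsupp.mapDomain_of_notMem_range
  rintro ⟨i, hi⟩
  have := congrArg Fin.val hi
  simp at this
  omega

/-- the splitting algebra map -/
def splitHom (K : Type*) [Field K] (n m : ℕ) :
    MvPolynomial (Fin (n + m)) K →ₐ[K] MvPolynomial (Fin m) (MvPolynomial (Fin n) K) :=
  aeval (Fin.addCases (fun i => C (X i)) (fun j => X j))

lemma splitHom_algebraMap (r : MvPolynomial (Fin n) K) :
    splitHom K n m (rename (Fin.castAdd m) r) = C r := by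
  induction r using MvPolynomial.induction_on with
  | C k =>
    rw [rename_C, ← algebraMap_eq, AlgHom.commutes]
    rfl
  | add p q hp hq => simp only [map_add, hp, hq]
  | mul_X p i hp => simp only [map_mul, hp, rename_X]; simp [splitHom]

lemma splitHom_newExp (b : Fin m →₀ ℕ) :
    splitHom K n m (monomial (newExp n b) 1) = monomial b 1 := by
  rw [newExp, ← rename_monomial, splitHom, aeval_rename]
  have : ((Fin.addCases (fun i => C (X i)) (fun j => X j) :
      Fin (n + m) → MvPolynomial (Fin m) (MvPolynomial (Fin n) K)) ∘ Fin.natAdd n) = X := by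
    funext j; simp
  rw [this, aeval_monomial, map_one, one_mul, monomial_eq, C_1, one_mul]

/-- the retraction -/
def retr (K : Type*) [Field K] (n m : ℕ) (b : Fin m →₀ ℕ) :
    MvPolynomial (Fin (n + m)) K →ₗ[MvPolynomial (Fin n) K] MvPolynomial (Fin n) K where
  toFun p := coeff b (splitHom K n m p)
  map_add' p q := by simp
  map_smul' r p := by
    have : r • p = rename (Fin.castAdd m) r * p := rfl
    rw [this, map_mul, splitHom_algebraMap, coeff_C_mul]
    rfl

/-- the embedding -/
def emb (K : Type*) [Field K] (n m : ℕ) (M : Type*) [AddCommGroup M] [Module K M]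
    [Module (MvPolynomial (Fin n) K) M] [IsScalarTower K (MvPolynomial (Fin n) K) M]
    (b : Fin m →₀ ℕ) : M →ₗ[K] scalarExt K n m M where
  toFun x := (monomial (newExp n b) (1 : K)) ⊗ₜ[MvPolynomial (Fin n) K] x
  map_add' x y := TensorProduct.tmul_add _ _ _
  map_smul' k x := by
    have h1 : k • x = (C k : MvPolynomial (Fin n) K) • x := by
      rw [← algebraMap_eq, algebraMap_smul]
    rw [h1, ← TensorProduct.smul_tmul]
    simp only [RingHom.id_apply]
    rw [TensorProduct.smul_tmul']
    congr 1
    have : (C k : MvPolynomial (Fin n) K) • (monomial (newExp n b) (1 : K)) =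
      rename (Fin.castAdd m) (C k) * monomial (newExp n b) (1 : K) := rfl
    rw [this, rename_C, C_mul', ]

lemma emb_injective (b : Fin m →₀ ℕ) : Function.Injective (emb K n m M b) := by
  intro x y h
  have key : ∀ x : M, TensorProduct.lid (MvPolynomial (Fin n) K) M
      ((retr K n m b).rTensor M (emb K n m M b x)) = x := by
    intro x
    change TensorProduct.lid (MvPolynomial (Fin n) K) M
      ((retr K n m b).rTensor M
        ((monomial (newExp n b) (1 : K)) ⊗ₜ[MvPolynomial (Fin n) K] x)) = x
    rw [LinearMap.rTensor_tmul, TensorProduct.lid_tmul]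
    have : retr K n m b (monomial (newExp n b) (1 : K)) = 1 := by
      change coeff b (splitHom K n m _) = 1
      rw [splitHom_newExp, coeff_monomial, if_pos rfl]
    rw [this, one_smul]
  rw [← key x, h, key y]

lemma tmul_split (t : Fin (n + m) →₀ ℕ) (x : M) :
    (monomial t (1 : K)) ⊗ₜ[MvPolynomial (Fin n) K] x =
      emb K n m M (t.comapDomain (Fin.natAdd n) (Fin.natAdd_injective m n).injOn)
        ((monomial (t.comapDomain (Fin.castAdd m) (Fin.castAdd_injective n m).injOn) (1 : K) :
          MvPolynomial (Fin n) K) • x) := by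
  set t1 := t.comapDomain (Fin.castAdd m) (Fin.castAdd_injective n m).injOn with ht1
  set t2 := t.comapDomain (Fin.natAdd n) (Fin.natAdd_injective m n).injOn with ht2
  change _ = (monomial (newExp n t2) (1 : K)) ⊗ₜ[MvPolynomial (Fin n) K]
    ((monomial t1 (1 : K) : MvPolynomial (Fin n) K) • x)
  rw [← TensorProduct.smul_tmul]
  congr 1
  have : (monomial t1 (1 : K) : MvPolynomial (Fin n) K) • (monomial (newExp n t2) (1 : K)) =
      rename (Fin.castAdd m) (monomial t1 (1 : K)) * monomial (newExp n t2) (1 : K) := rfl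
  rw [this, rename_monomial, monomial_mul, one_mul]
  refine congrArg (fun u => monomial u (1 : K)) ?_
  refine Finsupp.ext fun j => ?_
  rw [Finsupp.add_apply]
  refine Fin.addCases (fun i => ?_) (fun i => ?_) j
  · rw [newExp_castAdd, Finsupp.mapDomain_apply (Fin.castAdd_injective n m)]
    rfl
  · rw [newExp_natAdd, Finsupp.mapDomain_of_notMem_range]
    · simp [ht2]
    · rintro ⟨l, hl⟩
      have := congrArg Fin.val hl
      simp at this
      omega

lemma ext_eq_bot (gr : (Fin n → ℤ) → Submodule K M) (a' : Fin (n + m) → ℤ)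
    (h : ∃ j : Fin m, a' (Fin.natAdd n j) < 0) : extGrading K n m gr a' = ⊥ := by
  rw [extGrading, Submodule.span_eq_bot]
  rintro _ ⟨t, c, x, -, -, h2, -⟩
  obtain ⟨j, hj⟩ := h
  have := h2 j
  omega

lemma ext_eq_map (gr : (Fin n → ℤ) → Submodule K M) (hsmul : GradedSMul gr)
    (a : Fin n → ℤ) (b : Fin m →₀ ℕ) (a' : Fin (n + m) → ℤ)
    (ha : ∀ j, a' (Fin.castAdd m j) = a j) (hb : ∀ j, a' (Fin.natAdd n j) = b j) :
    extGrading K n m gr a' = (gr a).map (emb K n m M b) := by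
  apply le_antisymm
  · rw [extGrading, Submodule.span_le]
    rintro _ ⟨t, c, x, hx, h1, h2, rfl⟩
    rw [tmul_split]
    have hb' : t.comapDomain (Fin.natAdd n) (Fin.natAdd_injective m n).injOn = b := by
      ext j
      have := h2 j
      rw [hb] at this
      rw [Finsupp.comapDomain_apply]
      exact_mod_cast this
    rw [hb']
    refine Submodule.mem_map_of_mem ?_
    have := mono_smul_mem gr hsmul
      (t.comapDomain (Fin.castAdd m) (Fin.castAdd_injective n m).injOn) c x hx
    convert this using 2
    funext j
    rw [← ha, ← h1]
    rfl
  · rintro _ ⟨x, hx, rfl⟩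
    refine Submodule.subset_span ⟨newExp n b, a, x, hx, ?_, ?_, rfl⟩
    · intro j; rw [newExp_castAdd, ha]; simp
    · intro j; rw [newExp_natAdd, hb]

lemma rank_ext_iff (gr : (Fin n → ℤ) → Submodule K M) (hsmul : GradedSMul gr)
    (a' : Fin (n + m) → ℤ) (h : ∀ j : Fin m, 0 ≤ a' (Fin.natAdd n j)) (r : ℕ) :
    Module.rank K ↥(extGrading K n m gr a') = r ↔
      Module.rank K ↥(gr fun j => a' (Fin.castAdd m j)) = r := by
  rw [ext_eq_map gr hsmul (fun j => a' (Fin.castAdd m j))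
    (Finsupp.equivFunOnFinite.symm fun j => (a' (Fin.natAdd n j)).toNat) a' (fun _ => rfl)
    (fun j => by have := h j; simp; omega)]
  have e := (Submodule.equivMapOfInjective (emb K n m M
    (Finsupp.equivFunOnFinite.symm fun j => (a' (Fin.natAdd n j)).toNat)) (emb_injective _)
    (gr fun j => a' (Fin.castAdd m j))).lift_rank_eq
  rw [← Cardinal.lift_eq_nat_iff, ← e, Cardinal.lift_eq_nat_iff]

end ExtRank

section Comb

/-- add all the new variables -/
def liftZ {n : ℕ} (m : ℕ) (Z : Finset (Fin n)) : Finset (Fin (n + m)) :=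
  Z.map (Fin.castAddEmb m) ∪ Finset.univ.map (Fin.natAddEmb n)

variable {n m : ℕ}

lemma castAdd_ne_natAdd (i : Fin n) (j : Fin m) : Fin.castAdd m i ≠ Fin.natAdd n j := by
  intro h
  have := congrArg Fin.val h
  simp at this
  omega

lemma castAdd_mem_liftZ (Z : Finset (Fin n)) (j : Fin n) :
    Fin.castAdd m j ∈ liftZ m Z ↔ j ∈ Z := by
  simp [liftZ, (castAdd_ne_natAdd _ _).symm]

lemma natAdd_mem_liftZ (Z : Finset (Fin n)) (j : Fin m) :
    Fin.natAdd n j ∈ liftZ m Z := by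
  simp [liftZ]

lemma card_liftZ (Z : Finset (Fin n)) : (liftZ m Z).card = Z.card + m := by
  rw [liftZ, Finset.card_union_of_disjoint]
  · simp
  · rw [Finset.disjoint_left]
    intro x hx hx'
    simp only [Finset.mem_map] at hx hx'
    obtain ⟨i, -, rfl⟩ := hx
    obtain ⟨j, -, h⟩ := hx'
    exact castAdd_ne_natAdd i j h.symm

lemma liftZ_of_forall (Z' : Finset (Fin (n + m))) (h : ∀ j : Fin m, Fin.natAdd n j ∈ Z') :
    Z' = liftZ m (Finset.univ.filter fun j => Fin.castAdd m j ∈ Z') := by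
  ext j
  refine Fin.addCases (fun i => ?_) (fun i => ?_) j
  · rw [castAdd_mem_liftZ]; simp
  · simp [h i, natAdd_mem_liftZ]

lemma forall_fin_add {P : Fin (n + m) → Prop} :
    (∀ j, P j) ↔ (∀ j, P (Fin.castAdd m j)) ∧ ∀ j, P (Fin.natAdd n j) :=
  ⟨fun h => ⟨fun _ => h _, fun _ => h _⟩, fun h j => Fin.addCases h.1 h.2 j⟩

end Comb

section Depth

variable {K : Type*} [Field K] {n m : ℕ} {M : Type*} [AddCommGroup M] [Module K M]
    [Module (MvPolynomial (Fin n) K) M] [IsScalarTower K (MvPolynomial (Fin n) K) M]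

lemma decomp_forward (gr : (Fin n → ℤ) → Submodule K M) (hsmul : GradedSMul gr)
    {k : ℕ} (Z : Fin k → Finset (Fin n)) (s : Fin k → Fin n → ℤ)
    (h : IsHilbertDecomp gr Z s) :
    IsHilbertDecomp (extGrading K n m gr) (fun i => liftZ m (Z i))
      (fun i => Fin.append (s i) 0) := by
  intro c
  by_cases hc : ∀ j : Fin m, 0 ≤ c (Fin.natAdd n j)
  · rw [rank_ext_iff gr hsmul c hc, h]
    congr 2
    ext i
    simp [forall_fin_add, castAdd_mem_liftZ, natAdd_mem_liftZ, hc]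
  · push Not at hc
    rw [ext_eq_bot gr c hc, rank_bot, eq_comm, Nat.cast_eq_zero, Finset.card_eq_zero,
      Finset.filter_eq_empty_iff]
    rintro i - ⟨h1, -⟩
    obtain ⟨j, hj⟩ := hc
    have := h1 (Fin.natAdd n j)
    simp at this
    omega

lemma exists_ne_bot [Nontrivial M] (gr : (Fin n → ℤ) → Submodule K M)
    [DirectSum.Decomposition gr] : ∃ a, Module.rank K ↥(gr a) ≠ 0 := by
  classical
  by_contra h
  push Not at h
  obtain ⟨x, hx⟩ := exists_ne (0 : M)
  apply hx
  rw [← DirectSum.sum_support_decompose gr x]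
  refine Finset.sum_eq_zero fun c _ => ?_
  have h1 := h c
  rw [Submodule.rank_eq_zero] at h1
  have h2 := SetLike.coe_mem (DirectSum.decompose gr x c)
  exact (Submodule.mem_bot K).1 (h1.le h2)

lemma decomp_backward [Nontrivial M] (gr : (Fin n → ℤ) → Submodule K M)
    [DirectSum.Decomposition gr] (hsmul : GradedSMul gr)
    {k : ℕ} (Z' : Fin k → Finset (Fin (n + m))) (s' : Fin k → Fin (n + m) → ℤ)
    (h : IsHilbertDecomp (extGrading K n m gr) Z' s') :
    ∃ (l : ℕ) (Z : Fin (l + 1) → Finset (Fin n)) (s : Fin (l + 1) → Fin n → ℤ)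
      (e : Fin (l + 1) → Fin k), IsHilbertDecomp gr Z s ∧
        ∀ i, (Z' (e i)).card = (Z i).card + m := by
  classical
  obtain ⟨B, hB0, hB⟩ : ∃ B : ℤ, 0 ≤ B ∧ ∀ i j, s' i j < B := by
    refine ⟨1 + ∑ i, ∑ j, |s' i j|, by positivity, fun i j => ?_⟩
    have h1 : |s' i j| ≤ ∑ j, |s' i j| :=
      Finset.single_le_sum (f := fun j => |s' i j|) (fun _ _ => abs_nonneg _) (Finset.mem_univ j)
    have h2 : ∑ j, |s' i j| ≤ ∑ i, ∑ j, |s' i j| :=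
      Finset.single_le_sum (f := fun i => ∑ j, |s' i j|)
        (fun _ _ => Finset.sum_nonneg fun _ _ => abs_nonneg _) (Finset.mem_univ i)
    have h3 := le_abs_self (s' i j)
    omega
  let T : Finset (Fin k) := Finset.univ.filter fun i => ∀ j : Fin m, Fin.natAdd n j ∈ Z' i
  have hT : ∀ i, i ∈ T ↔ ∀ j : Fin m, Fin.natAdd n j ∈ Z' i := by intro i; simp [T]
  have hslice : ∀ a : Fin n → ℤ, Module.rank K ↥(gr a) =
      ((Finset.univ.filter fun i => i ∈ T ∧ (∀ j, s' i (Fin.castAdd m j) ≤ a j) ∧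
        ∀ j, Fin.castAdd m j ∉ Z' i → a j = s' i (Fin.castAdd m j)).card : Cardinal) := by
    intro a
    have h1 := h (Fin.append a fun _ => B)
    rw [rank_ext_iff gr hsmul _ (by intro j; simpa using hB0)] at h1
    have hg : (fun j => Fin.append a (fun _ : Fin m => B) (Fin.castAdd m j)) = a :=
      funext fun j => Fin.append_left _ _ j
    rw [hg] at h1
    rw [h1]
    congr 2
    ext i
    simp only [Finset.mem_filter, Finset.mem_univ, true_and, forall_fin_add, Fin.append_left,
      Fin.append_right, hT]
    constructor
    · rintro ⟨⟨h2, h3⟩, h4, h5⟩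
      refine ⟨fun j => ?_, h2, h4⟩
      by_contra hj
      have := h5 j hj
      have := hB i (Fin.natAdd n j)
      omega
    · rintro ⟨h2, h3, h4⟩
      exact ⟨⟨h3, fun j => (hB _ _).le⟩, h4, fun j hj => absurd (h2 j) hj⟩
  have hTne : T.card ≠ 0 := by
    intro h0
    rw [Finset.card_eq_zero] at h0
    obtain ⟨a, ha⟩ := exists_ne_bot gr
    apply ha
    rw [hslice, h0]
    simp
  obtain ⟨l, hl⟩ := Nat.exists_eq_succ_of_ne_zero hTne
  let e : Fin (l + 1) ≃ T := (T.equivFinOfCardEq hl).symm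
  refine ⟨l, fun i => Finset.univ.filter fun j => Fin.castAdd m j ∈ Z' (e i),
    fun i j => s' (e i) (Fin.castAdd m j), fun i => e i, ?_, ?_⟩
  · intro a
    rw [hslice]
    congr 1
    symm
    refine Finset.card_bij (fun i _ => (e i : Fin k)) ?_ ?_ ?_
    · intro i hi
      simpa using hi
    · intro i _ j _ hij
      exact e.injective (Subtype.ext hij)
    · intro i hi
      simp only [Finset.mem_filter, Finset.mem_univ, true_and] at hi
      refine ⟨e.symm ⟨i, hi.1⟩, ?_, by simp⟩
      simpa using hi.2
  · intro i
    rw [← card_liftZ, ← liftZ_of_forall _ ((hT _).1 (e i).2)]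

end Depth

/-- **Proposition.**  Let `M` be a finitely generated multigraded module over
`R = K[X₁,…,Xₙ]` and `M' = M ⊗_K K[X_{n+1},…,X_{n+m}]` (with its `ℤ^{n+m}`-grading)
the module over `R' = K[X₁,…,X_{n+m}]` obtained by scalar extension.  Then
`Hdepth_{R'} M' = Hdepth_R M + m`. -/
theorem hdepth_scalarExtension
    {K : Type*} [Field K] {n m : ℕ}
    (M : Type*) [AddCommGroup M] [Module K M]
    [Module (MvPolynomial (Fin n) K) M]
    [IsScalarTower K (MvPolynomial (Fin n) K) M]
    [Module.Finite (MvPolynomial (Fin n) K) M] [Nontrivial M]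
    (gr : (Fin n → ℤ) → Submodule K M) [DirectSum.Decomposition gr]
    (hsmul : GradedSMul gr) :
    hdepth (extGrading K n m gr) = hdepth gr + m := by
  classical
  set S := {d | ∃ (k : ℕ) (Z : Fin (k + 1) → Finset (Fin n)) (s : Fin (k + 1) → Fin n → ℤ),
    IsHilbertDecomp gr Z s ∧
      d = Finset.univ.inf' Finset.univ_nonempty fun i => (Z i).card} with hS
  set S' := {d | ∃ (k : ℕ) (Z : Fin (k + 1) → Finset (Fin (n + m)))
      (s : Fin (k + 1) → Fin (n + m) → ℤ),
    IsHilbertDecomp (extGrading K n m gr) Z s ∧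
      d = Finset.univ.inf' Finset.univ_nonempty fun i => (Z i).card} with hS'
  change sSup S' = sSup S + m
  have hbdd : BddAbove S := by
    refine ⟨n, ?_⟩
    rintro d ⟨k, Z, s, -, rfl⟩
    refine (Finset.inf'_le _ (Finset.mem_univ 0)).trans ?_
    simpa using Finset.card_le_univ (Z 0)
  have hbdd' : BddAbove S' := by
    refine ⟨n + m, ?_⟩
    rintro d ⟨k, Z, s, -, rfl⟩
    refine (Finset.inf'_le _ (Finset.mem_univ 0)).trans ?_
    simpa using Finset.card_le_univ (Z 0)
  have hne : S.Nonempty := by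
    obtain ⟨k, Z, s, h⟩ := exists_hilbert gr hsmul
    cases k with
    | zero =>
      obtain ⟨a, ha⟩ := exists_ne_bot gr
      exact absurd (by rw [h a]; simp) ha
    | succ k => exact ⟨_, k, Z, s, h, rfl⟩
  have hfw : ∀ d ∈ S, d + m ∈ S' := by
    rintro d ⟨k, Z, s, h, rfl⟩
    refine ⟨k, _, _, decomp_forward gr hsmul Z s h, ?_⟩
    simp only [card_liftZ]
    apply le_antisymm
    · refine Finset.le_inf' _ _ fun i hi => ?_
      exact Nat.add_le_add_right (Finset.inf'_le _ hi) m
    · obtain ⟨i, hi, he⟩ := Finset.exists_mem_eq_inf' (Finset.univ_nonempty (α := Fin (k + 1)))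
        (fun i => (Z i).card)
      rw [he]
      exact Finset.inf'_le (fun i => (Z i).card + m) hi
  apply le_antisymm
  · refine csSup_le ⟨_, hfw _ hne.some_mem⟩ ?_
    rintro d' ⟨k, Z', s', h, rfl⟩
    obtain ⟨l, Z, s, e, hd, hc⟩ := decomp_backward gr hsmul Z' s' h
    have h1 := le_csSup hbdd (show _ ∈ S from ⟨l, Z, s, hd, rfl⟩)
    refine le_trans ?_ (Nat.add_le_add_right h1 m)
    obtain ⟨i, hi, he⟩ := Finset.exists_mem_eq_inf' (Finset.univ_nonempty (α := Fin (l + 1)))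
      (fun i => (Z i).card)
    rw [he, ← hc]
    exact Finset.inf'_le (fun i => (Z' i).card) (Finset.mem_univ (e i))
  · exact le_csSup hbdd' (hfw _ (Nat.sSup_mem hne hbdd))
end
end

section
/- Let M be a finitely generated ℤⁿ-graded R-module, let R' = R ⊗_K K[X_{n+1},…,X_{n+m}] and M' = M ⊗_K K[X_{n+1},…,X_{n+m}]. Then Stdepth_{R'} M' = Stdepth_R M + m. -/
open MvPolynomial TensorProduct

noncomputable section

section helpers

theorem aux_mem_set {K : Type*} [Field K] {ν : ℕ} {N : Type*} [AddCommGroup N]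
    [Module K N] [Module (MvPolynomial (Fin ν) K) N]
    (gr : (Fin ν → ℤ) → Submodule K N) {ι : Type} [Fintype ι] [Nonempty ι]
    (Z : ι → Finset (Fin ν)) (s : ι → Fin ν → ℤ) (x : ι → N)
    (h : IsStanleyDecomp gr Z s x) :
    ∃ d ∈ {d | ∃ (k : ℕ) (Z : Fin (k + 1) → Finset (Fin ν)) (s : Fin (k + 1) → Fin ν → ℤ)
      (m : Fin (k + 1) → N), IsStanleyDecomp gr Z s m ∧
      d = Finset.univ.inf' Finset.univ_nonempty fun i => (Z i).card},
      ∀ e, (∀ i, e ≤ (Z i).card) → e ≤ d := by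
  obtain ⟨k, hk⟩ : ∃ k, Fintype.card ι = k + 1 :=
    Nat.exists_eq_succ_of_ne_zero Fintype.card_ne_zero
  let f : Fin (k + 1) ≃ ι := (Fintype.equivFinOfCardEq hk).symm
  obtain ⟨h1, h2, h3, h4⟩ := h
  refine ⟨_, ⟨k, Z ∘ f, s ∘ f, x ∘ f, ⟨fun i => h1 _, fun i => h2 _, h3.comp f.injective, ?_⟩, rfl⟩, ?_⟩
  · rw [← h4]
    exact f.iSup_comp (g := fun i => stanleySpace K (x i) (Z i))
  · intro e he
    exact Finset.le_inf' _ _ fun i _ => he _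

theorem aux_bdd {K : Type*} [Field K] {ν : ℕ} {N : Type*} [AddCommGroup N]
    [Module K N] [Module (MvPolynomial (Fin ν) K) N]
    (gr : (Fin ν → ℤ) → Submodule K N) :
    BddAbove {d | ∃ (k : ℕ) (Z : Fin (k + 1) → Finset (Fin ν)) (s : Fin (k + 1) → Fin ν → ℤ)
      (m : Fin (k + 1) → N), IsStanleyDecomp gr Z s m ∧
      d = Finset.univ.inf' Finset.univ_nonempty fun i => (Z i).card} := by
  refine ⟨ν, ?_⟩
  rintro d ⟨k, Z, s, x, -, rfl⟩
  refine (Finset.inf'_le _ (Finset.mem_univ 0)).trans ?_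
  simpa using Finset.card_le_univ (Z 0)

theorem aux_indep_option {K N : Type*} [Field K] [AddCommGroup N] [Module K N] {ι : Type*}
    (S : Option ι → Submodule K N) (h : iSupIndep fun i => S (some i))
    (h' : Disjoint (S none) (⨆ i, S (some i))) : iSupIndep S := by
  intro i
  cases i with
  | none =>
    refine h'.mono_right (iSup₂_le ?_)
    rintro (_ | j) hj
    · exact absurd rfl hj
    · exact le_iSup (fun i => S (some i)) j
  | some i =>
    have := (h i).disjoint_sup_right_of_disjoint_sup_left (c := S none) (h'.symm.mono_left
      (sup_le (le_iSup (fun i => S (some i)) i)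
        (iSup₂_le fun j _ => le_iSup (fun i => S (some i)) j)))
    refine this.mono_right (iSup₂_le ?_)
    rintro (_ | j) hj
    · exact le_sup_right
    · refine le_sup_of_le_left ?_
      exact le_iSup₂_of_le (f := fun j (_ : j ≠ i) => S (some j)) j (fun h => hj (by rw [h])) le_rfl

variable {K : Type*} [Field K] {n : ℕ} {M : Type*} [AddCommGroup M] [Module K M]
    [Module (MvPolynomial (Fin n) K) M] [IsScalarTower K (MvPolynomial (Fin n) K) M]
    (gr : (Fin n → ℤ) → Submodule K M)

theorem aux_mon_mem (hsmul : GradedSMul gr) (t : Fin n →₀ ℕ) :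
    ∀ (a : Fin n → ℤ) (x : M), x ∈ gr a →
      monomial t (1 : K) • x ∈ gr (a + fun j => (t j : ℤ)) := by
  induction t using Finsupp.induction_linear with
  | zero =>
    intro a x hx
    have : (a + fun j => (((0 : Fin n →₀ ℕ) j : ℕ) : ℤ)) = a := by ext j; simp
    rw [this]
    simpa [← MvPolynomial.C_apply] using hx
  | add f g hf hg =>
    intro a x hx
    have := hf _ _ (hg _ _ hx)
    rw [← mul_smul, monomial_mul, one_mul] at this
    convert this using 2
    ext j
    simp
    ring
  | single j k =>
    induction k with
    | zero =>
      intro a x hx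
      have : (a + fun i => (((Finsupp.single j 0 : Fin n →₀ ℕ) i : ℕ) : ℤ)) = a := by ext j; simp
      rw [this]
      simpa [← MvPolynomial.C_apply] using hx
    | succ k ih =>
      intro a x hx
      have := hsmul j _ _ (ih a x hx)
      rw [← mul_smul, X, monomial_mul, one_mul, ← Finsupp.single_add] at this
      rw [add_comm 1 k] at this
      convert this using 2
      ext i
      by_cases hi : i = j
      · subst hi
        simp
        ring
      · simp [hi, Finsupp.single_apply, Ne.symm hi]

theorem aux_monomial_smul (t : Fin n →₀ ℕ) (c : K) (x : M) :
    monomial t c • x = c • (monomial t (1 : K) • x) := by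
  rw [← smul_assoc, smul_monomial, smul_eq_mul, mul_one]

variable [DirectSum.Decomposition gr]

theorem aux_dec (hsmul : GradedSMul gr) (a : Fin n → ℤ) (x : M) (hx : x ∈ gr a)
    (t : Fin n →₀ ℕ) (q : MvPolynomial (Fin n) K) :
    (DirectSum.decompose gr (q • x) (a + fun j => (t j : ℤ)) : M)
      = coeff t q • (monomial t (1 : K) • x) := by
  induction q using MvPolynomial.induction_on' with
  | monomial u c =>
    rw [aux_monomial_smul u c x]
    have hm := (gr _).smul_mem c (aux_mon_mem gr hsmul u a x hx)
    by_cases h : u = t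
    · subst h
      rw [DirectSum.decompose_of_mem_same gr hm]
      simp
    · rw [DirectSum.decompose_of_mem_ne gr hm]
      · simp [coeff_monomial, h]
      · intro h'
        apply h
        ext j
        have := congrFun h' j
        simpa using this
  | add p q hp hq =>
    rw [add_smul, DirectSum.decompose_add, DirectSum.add_apply, Submodule.coe_add, hp, hq,
      coeff_add, add_smul]

theorem aux_dec_all (hsmul : GradedSMul gr) (a : Fin n → ℤ) (x : M) (hx : x ∈ gr a)
    (b : Fin n → ℤ) (q : MvPolynomial (Fin n) K) :
    (DirectSum.decompose gr (q • x) b : M) ∈ Submodule.span (MvPolynomial (Fin n) K) {x} := by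
  induction q using MvPolynomial.induction_on' with
  | monomial u c =>
    have hm := (gr _).smul_mem c (aux_mon_mem gr hsmul u a x hx)
    rw [← aux_monomial_smul u c x] at hm
    by_cases h : (a + fun j => (u j : ℤ)) = b
    · subst h
      rw [DirectSum.decompose_of_mem_same gr hm]
      exact Submodule.smul_mem _ _ (Submodule.mem_span_singleton_self x)
    · rw [DirectSum.decompose_of_mem_ne gr hm h]
      exact Submodule.zero_mem _
  | add p q hp hq =>
    rw [add_smul, DirectSum.decompose_add, DirectSum.add_apply, Submodule.coe_add]
    exact Submodule.add_mem _ hp hq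

theorem aux_stanley_mem {ν : ℕ} {N : Type*} [AddCommGroup N] [Module K N]
    [Module (MvPolynomial (Fin ν) K) N] [IsScalarTower K (MvPolynomial (Fin ν) K) N]
    (x : N) (Z : Finset (Fin ν)) (y : N) (hy : y ∈ stanleySpace K x Z) :
    ∃ q ∈ MvPolynomial.supported K (↑Z : Set (Fin ν)), y = q • x := by
  induction hy using Submodule.span_induction with
  | mem y hy =>
    obtain ⟨t, ht, rfl⟩ := hy
    refine ⟨monomial t 1, ?_, rfl⟩
    rw [mem_supported, vars_monomial one_ne_zero]
    intro j hj
    by_contra h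
    simp at hj
    exact hj (ht j h)
  | zero => exact ⟨0, zero_mem _, by simp⟩
  | add y z _ _ hy hz =>
    obtain ⟨p, hp, rfl⟩ := hy
    obtain ⟨q, hq, rfl⟩ := hz
    exact ⟨p + q, add_mem hp hq, by rw [add_smul]⟩
  | smul c y _ hy =>
    obtain ⟨p, hp, rfl⟩ := hy
    exact ⟨c • p, Subalgebra.smul_mem _ hp c, by rw [smul_assoc]⟩

theorem aux_supp {ν : ℕ} {Z : Set (Fin ν)} {q : MvPolynomial (Fin ν) K}
    (hq : q ∈ MvPolynomial.supported K Z) {t : Fin ν →₀ ℕ} (ht : coeff t q ≠ 0) :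
    ∀ j ∉ Z, t j = 0 := by
  intro j hj
  by_contra h
  apply hj
  rw [mem_supported] at hq
  apply hq
  rw [Finset.mem_coe, mem_vars_iff_mem_support]
  exact ⟨t, mem_support_iff.2 ht, Finsupp.mem_support_iff.2 h⟩

/-- a homogeneous submodule together with a Stanley decomposition -/
def AuxP (N : Submodule (MvPolynomial (Fin n) K) M) : Prop :=
  (∀ x ∈ N, ∀ a, (DirectSum.decompose gr x a : M) ∈ N) ∧
  ∃ (ι : Type) (_ : Fintype ι) (Z : ι → Finset (Fin n)) (s : ι → Fin n → ℤ) (m : ι → M),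
    (∀ i, m i ∈ gr (s i)) ∧
    (∀ i, ∀ q ∈ MvPolynomial.supported K (↑(Z i) : Set (Fin n)), q • m i = 0 → q = 0) ∧
    (iSupIndep fun i => stanleySpace K (m i) (Z i)) ∧
    (⨆ i, stanleySpace K (m i) (Z i)) = N.restrictScalars K

theorem aux_step [IsNoetherian (MvPolynomial (Fin n) K) M] (hsmul : GradedSMul gr)
    (N : Submodule (MvPolynomial (Fin n) K) M)
    (hN : AuxP gr N) (hne : N ≠ ⊤) : ∃ N', AuxP gr N' ∧ N < N' := by
  obtain ⟨hh, ι, _, Z, s, e, h1, h2, h3, h4⟩ := hN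
  let Q : Set (Ideal (MvPolynomial (Fin n) K)) :=
    {I | ∃ a, ∃ x ∈ gr a, x ∉ N ∧ I = N.comap (LinearMap.toSpanSingleton _ M x)}
  have hQ : Q.Nonempty := by
    obtain ⟨y, hy⟩ : ∃ y, y ∉ N := by
      by_contra! h
      exact hne ((Submodule.eq_top_iff').2 h)
    have : ∃ a, (DirectSum.decompose gr y a : M) ∉ N := by
      by_contra! h
      apply hy
      classical
      rw [← DirectSum.sum_support_decompose gr y]
      exact Submodule.sum_mem _ fun a _ => h a
    obtain ⟨a, ha⟩ := this
    exact ⟨_, a, _, SetLike.coe_mem _, ha, rfl⟩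
  obtain ⟨I, ⟨a, x, hxa, hxN, hI⟩, hmax⟩ := set_has_maximal_iff_noetherian.2
    (inferInstance : IsNoetherian (MvPolynomial (Fin n) K) (MvPolynomial (Fin n) K)) Q hQ
  have hmemI : ∀ q, q ∈ I ↔ q • x ∈ N := by intro q; rw [hI]; simp
  -- maximality
  have key : ∀ (t : Fin n →₀ ℕ), monomial t (1 : K) • x ∉ N →
      ∀ q : MvPolynomial (Fin n) K, q • (monomial t (1 : K) • x) ∈ N → q • x ∈ N := by
    intro t ht q hq
    by_contra hcon
    refine hmax _ ⟨_, _, aux_mon_mem gr hsmul t a x hxa, ht, rfl⟩ ?_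
    refine lt_of_le_of_ne ?_ ?_
    · intro p hp
      rw [hmemI] at hp
      simp only [Submodule.mem_comap, LinearMap.toSpanSingleton_apply]
      rw [smul_comm]
      exact N.smul_mem _ hp
    · intro h
      have : q ∈ I := by
        rw [h]
        simpa using hq
      exact hcon ((hmemI q).1 this)
  classical
  let Z0 : Finset (Fin n) := Finset.univ.filter fun j => (X j : MvPolynomial (Fin n) K) • x ∉ N
  have hZ0 : ∀ t : Fin n →₀ ℕ, (∀ j ∉ Z0, t j = 0) → monomial t (1 : K) • x ∉ N := by
    have aux : ∀ t : Fin n →₀ ℕ, (∀ j ∉ Z0, t j = 0) → ∀ u : Fin n →₀ ℕ,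
        monomial u (1 : K) • x ∉ N → monomial (t + u) (1 : K) • x ∉ N := by
      intro t
      induction t using Finsupp.induction_linear with
      | zero => intro _ u hu; rwa [zero_add]
      | add f g hf hg =>
        intro ht u hu
        rw [add_assoc]
        refine hf (fun j hj => ?_) _ (hg (fun j hj => ?_) _ hu)
        · have := ht j hj
          simp at this
          exact this.1
        · have := ht j hj
          simp at this
          exact this.2
      | single j k =>
        induction k with
        | zero => intro _ u hu; rwa [Finsupp.single_zero, zero_add]
        | succ k ih =>
          intro ht u hu hcon
          have hj : j ∈ Z0 := by
            by_contra h
            simpa using ht j h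
          have h5 := ih (fun i hi => by
            have : i ≠ j := fun h => hi (h ▸ hj)
            simp [Finsupp.single_apply, this.symm]) u hu
          have h6 : (X j : MvPolynomial (Fin n) K) • x ∈ N := by
            refine key _ h5 _ ?_
            rw [← mul_smul, X, monomial_mul, one_mul, ← add_assoc, ← Finsupp.single_add,
              add_comm 1 k]
            exact hcon
          exact (Finset.mem_filter.1 hj).2 h6
    intro t ht
    have := aux t ht 0 (by simpa [← MvPolynomial.C_apply] using hxN)
    rwa [add_zero] at this
  have hZ1 : ∀ t : Fin n →₀ ℕ, ¬ (∀ j ∉ Z0, t j = 0) → monomial t (1 : K) • x ∈ N := by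
    intro t ht
    push Not at ht
    obtain ⟨j, hj, htj⟩ := ht
    have hj' : (X j : MvPolynomial (Fin n) K) • x ∈ N := by
      by_contra h
      exact hj (by simp [Z0, h])
    have : t = (t - Finsupp.single j 1) + Finsupp.single j 1 := by
      rw [tsub_add_cancel_of_le]
      simpa [Nat.one_le_iff_ne_zero] using htj
    have h2 : monomial t (1 : K) = monomial (t - Finsupp.single j 1) 1 * X j := by
      rw [X, monomial_mul, ← this, one_mul]
    rw [h2, mul_smul]
    exact N.smul_mem _ hj'
  have hann : ∀ q ∈ MvPolynomial.supported K (↑Z0 : Set (Fin n)), q • x ∈ N → q = 0 := by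
    intro q hq hqx
    ext t
    by_contra hc
    rw [coeff_zero] at hc
    have h5 := hh _ hqx (a + fun j => (t j : ℤ))
    rw [aux_dec gr hsmul a x hxa] at h5
    refine hZ0 t (fun j hj => aux_supp hq hc j (by simpa using hj)) ?_
    have := (N.restrictScalars K).smul_mem (coeff t q)⁻¹ h5
    rwa [smul_smul, inv_mul_cancel₀ hc, one_smul] at this
  refine ⟨N ⊔ Submodule.span _ {x}, ⟨?_, Option ι, inferInstance, fun i => i.elim Z0 Z,
    fun i => i.elim a s, fun i => i.elim x e, ?_, ?_, ?_, ?_⟩, ?_⟩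
  · intro y hy b
    obtain ⟨u, hu, v, hv, rfl⟩ := Submodule.mem_sup.1 hy
    obtain ⟨r, rfl⟩ := Submodule.mem_span_singleton.1 hv
    rw [DirectSum.decompose_add, DirectSum.add_apply, Submodule.coe_add]
    exact Submodule.add_mem_sup (hh _ hu _) (aux_dec_all gr hsmul a x hxa b r)
  · rintro (_ | i)
    · exact hxa
    · exact h1 i
  · rintro (_ | i)
    · intro q hq h0
      exact hann q hq (by rw [show q • x = 0 from h0]; exact N.zero_mem)
    · exact h2 i
  · apply aux_indep_option
    · exact h3
    · change Disjoint (stanleySpace K x Z0) (⨆ i, stanleySpace K (e i) (Z i))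
      rw [h4, Submodule.disjoint_def]
      intro y hy hyN
      obtain ⟨q, hq, rfl⟩ := aux_stanley_mem x Z0 y hy
      rw [hann q hq hyN, zero_smul]
  · rw [iSup_option]
    change stanleySpace K x Z0 ⊔ (⨆ i, stanleySpace K (e i) (Z i)) = _
    rw [h4]
    apply le_antisymm
    · refine sup_le ?_ ?_
      · refine Submodule.span_le.2 ?_
        rintro _ ⟨t, ht, rfl⟩
        exact Submodule.mem_sup_right (Submodule.smul_mem _ _ (Submodule.mem_span_singleton_self x))
      · intro y hy
        exact Submodule.mem_sup_left hy
    · intro y hy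
      obtain ⟨u, hu, v, hv, rfl⟩ := Submodule.mem_sup.1 hy
      obtain ⟨r, rfl⟩ := Submodule.mem_span_singleton.1 hv
      refine Submodule.add_mem _ (Submodule.mem_sup_right hu) ?_
      clear hy hv
      induction r using MvPolynomial.induction_on' with
      | monomial t c =>
        rw [aux_monomial_smul]
        refine Submodule.smul_mem _ _ ?_
        by_cases ht : ∀ j ∉ Z0, t j = 0
        · exact Submodule.mem_sup_left (Submodule.subset_span ⟨t, ht, rfl⟩)
        · exact Submodule.mem_sup_right (hZ1 t ht)
      | add p q hp hq =>
        rw [add_smul]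
        exact Submodule.add_mem _ hp hq
  · refine lt_of_le_of_ne le_sup_left ?_
    intro h
    apply hxN
    rw [h]
    exact Submodule.mem_sup_right (Submodule.mem_span_singleton_self x)

theorem aux_exists [Module.Finite (MvPolynomial (Fin n) K) M] (hsmul : GradedSMul gr) :
    AuxP gr (⊤ : Submodule (MvPolynomial (Fin n) K) M) := by
  have : IsNoetherian (MvPolynomial (Fin n) K) M := isNoetherian_of_isNoetherianRing_of_finite _ _
  obtain ⟨N, hN, hmax⟩ := set_has_maximal_iff_noetherian.2 this {N | AuxP gr N} ⟨⊥, by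
    refine ⟨?_, Empty, inferInstance, Empty.elim, Empty.elim, Empty.elim, ?_, ?_, ?_, ?_⟩
    · intro x hx a
      rw [Submodule.mem_bot] at hx
      simp [hx]
    · rintro ⟨⟩
    · rintro ⟨⟩
    · rintro ⟨⟩
    · rw [iSup_of_empty]
      rfl⟩
  by_cases h : N = ⊤
  · rwa [← h]
  · obtain ⟨N', h1, h2⟩ := aux_step gr hsmul N hN h
    exact absurd h2 (hmax _ h1)

end helpers
section tensor

instance auxTower (K : Type*) [Field K] (n m : ℕ) :
    IsScalarTower K (MvPolynomial (Fin n) K) (MvPolynomial (Fin (n + m)) K) :=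
  IsScalarTower.of_algebraMap_eq fun c =>
    (MvPolynomial.rename_C (σ := Fin n) (τ := Fin (n + m)) (R := K) (Fin.castAdd m) c).symm

variable {K : Type*} [Field K] {n m : ℕ}

/-- first coordinates -/
def auxHd (t : Fin (n + m) →₀ ℕ) : Fin n →₀ ℕ :=
  Finsupp.equivFunOnFinite.symm fun j => t (Fin.castAdd m j)

/-- last coordinates -/
def auxTl (t : Fin (n + m) →₀ ℕ) : Fin m →₀ ℕ :=
  Finsupp.equivFunOnFinite.symm fun j => t (Fin.natAdd n j)

/-- embed an exponent on the last coordinates -/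
def auxUp (n : ℕ) {m : ℕ} (b : Fin m →₀ ℕ) : Fin (n + m) →₀ ℕ := b.mapDomain (Fin.natAdd n)

/-- embed an exponent on the first coordinates -/
def auxLf {n : ℕ} (m : ℕ) (b : Fin n →₀ ℕ) : Fin (n + m) →₀ ℕ := b.mapDomain (Fin.castAdd m)

theorem auxUp_cast (b : Fin m →₀ ℕ) (j : Fin n) : auxUp n b (Fin.castAdd m j) = 0 := by
  refine Finsupp.mapDomain_of_notMem_range _ _ ?_
  rintro ⟨i, hi⟩
  have := congrArg Fin.val hi
  simp at this
  omega

theorem auxUp_nat (b : Fin m →₀ ℕ) (j : Fin m) : auxUp n b (Fin.natAdd n j) = b j :=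
  Finsupp.mapDomain_apply (Fin.natAdd_injective _ _) _ _

theorem auxLf_cast (b : Fin n →₀ ℕ) (j : Fin n) : auxLf m b (Fin.castAdd m j) = b j :=
  Finsupp.mapDomain_apply (Fin.castAdd_injective _ _) _ _

theorem auxLf_nat (b : Fin n →₀ ℕ) (j : Fin m) : auxLf m b (Fin.natAdd n j) = 0 := by
  refine Finsupp.mapDomain_of_notMem_range _ _ ?_
  rintro ⟨i, hi⟩
  have := congrArg Fin.val hi
  simp at this
  omega

theorem aux_split (t : Fin (n + m) →₀ ℕ) : auxLf m (auxHd t) + auxUp n (auxTl t) = t := by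
  ext j
  refine Fin.addCases (fun j => ?_) (fun j => ?_) j
  · simp [auxLf_cast, auxUp_cast, auxHd]
  · simp [auxLf_nat, auxUp_nat, auxTl]

theorem aux_algebraMap (p : MvPolynomial (Fin n) K) :
    algebraMap (MvPolynomial (Fin n) K) (MvPolynomial (Fin (n + m)) K) p
      = rename (Fin.castAdd m) p := rfl

theorem aux_monomial_split (t : Fin (n + m) →₀ ℕ) (c : K) :
    (monomial t c : MvPolynomial (Fin (n + m)) K)
      = (monomial (auxHd t) c : MvPolynomial (Fin n) K) • monomial (auxUp n (auxTl t)) (1 : K) := by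
  rw [Algebra.smul_def, aux_algebraMap, rename_monomial, monomial_mul, mul_one]
  change _ = monomial (auxLf m (auxHd t) + auxUp n (auxTl t)) c
  rw [aux_split]

/-- the iso `R' → R[X_{n+1},…]` -/
def auxSig (K : Type*) [Field K] (n m : ℕ) :
    MvPolynomial (Fin (n + m)) K →ₐ[K] MvPolynomial (Fin m) (MvPolynomial (Fin n) K) :=
  aeval (Fin.addCases (fun i => C (X i)) X)

theorem auxSig_rename (p : MvPolynomial (Fin n) K) :
    auxSig K n m (rename (Fin.castAdd m) p) = C p := by
  induction p using MvPolynomial.induction_on with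
  | C a =>
    rw [rename_C, auxSig, aeval_C]
    rfl
  | add p q hp hq => simp [hp, hq]
  | mul_X p i hp =>
    rw [map_mul, map_mul, hp, map_mul, rename_X]
    congr 1
    simp [auxSig]

theorem auxSig_up (b : Fin m →₀ ℕ) :
    auxSig K n m (monomial (auxUp n b) 1) = monomial b 1 := by
  rw [auxUp, ← rename_monomial, auxSig, aeval_rename, aeval_monomial, monomial_eq]
  simp [Function.comp_def]

theorem auxSig_inj (p : MvPolynomial (Fin (n + m)) K) (h : auxSig K n m p = 0) : p = 0 := by
  have key : ∀ p : MvPolynomial (Fin (n + m)) K,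
      aeval (R := MvPolynomial (Fin n) K)
        (fun j => (X (Fin.natAdd n j) : MvPolynomial (Fin (n + m)) K)) (auxSig K n m p) = p := by
    intro p
    induction p using MvPolynomial.induction_on with
    | C a =>
      have : auxSig K n m (C a) = C (C a) := by
        rw [← auxSig_rename, rename_C]
      rw [this, aeval_C, aux_algebraMap, rename_C]
    | add p q hp hq => simp [hp, hq]
    | mul_X p i hp =>
      rw [map_mul, map_mul, hp]
      congr 1
      refine Fin.addCases (fun j => ?_) (fun j => ?_) i
      · simp [auxSig, aux_algebraMap]
      · simp [auxSig]
  rw [← key p, h, map_zero]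

/-- coefficient map -/
def auxCo (K : Type*) [Field K] (n m : ℕ) (b : Fin m →₀ ℕ) :
    MvPolynomial (Fin (n + m)) K →ₗ[MvPolynomial (Fin n) K] MvPolynomial (Fin n) K where
  toFun p := coeff b (auxSig K n m p)
  map_add' p q := by simp
  map_smul' r p := by
    rw [Algebra.smul_def, aux_algebraMap, map_mul, auxSig_rename, coeff_C_mul]
    rfl

theorem auxCo_monomial (b : Fin m →₀ ℕ) (t : Fin (n + m) →₀ ℕ) (c : K) [Decidable (auxTl t = b)] :
    auxCo K n m b (monomial t c) = if auxTl t = b then monomial (auxHd t) c else 0 := by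
  classical
  rw [aux_monomial_split, map_smul]
  change _ • coeff b (auxSig K n m _) = _
  rw [auxSig_up, coeff_monomial]
  split_ifs <;> simp

theorem auxCo_supp (b : Fin m →₀ ℕ) (Z' : Set (Fin (n + m))) (Z : Set (Fin n))
    (hZ : ∀ j, Fin.castAdd m j ∈ Z' → j ∈ Z) (q : MvPolynomial (Fin (n + m)) K)
    (hq : q ∈ supported K Z') : auxCo K n m b q ∈ supported K Z := by
  classical
  rw [q.as_sum, map_sum]
  refine sum_mem fun t ht => ?_
  rw [auxCo_monomial]
  split_ifs with h
  · rw [mem_supported]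
    intro j hj
    rw [Finset.mem_coe, mem_vars_iff_mem_support] at hj
    obtain ⟨d, hd, hjd⟩ := hj
    have := support_monomial_subset hd
    rw [Finset.mem_singleton] at this
    subst this
    apply hZ
    by_contra hcon
    have h0 := aux_supp hq (mem_support_iff.1 ht) _ hcon
    rw [Finsupp.mem_support_iff] at hjd
    exact hjd h0
  · exact zero_mem _

variable {M : Type*} [AddCommGroup M] [Module K M]
    [Module (MvPolynomial (Fin n) K) M] [IsScalarTower K (MvPolynomial (Fin n) K) M]

/-- component map `M' → M` -/
def auxPi (K : Type*) [Field K] (n m : ℕ) (M : Type*) [AddCommGroup M]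
    [Module (MvPolynomial (Fin n) K) M] (b : Fin m →₀ ℕ) :
    scalarExt K n m M →ₗ[MvPolynomial (Fin n) K] M :=
  TensorProduct.lift ((LinearMap.lsmul (MvPolynomial (Fin n) K) M).comp (auxCo K n m b))

theorem auxPi_tmul (b : Fin m →₀ ℕ) (p : MvPolynomial (Fin (n + m)) K) (x : M) :
    auxPi K n m M b (p ⊗ₜ x) = auxCo K n m b p • x := rfl

instance auxTower2 : IsScalarTower K (MvPolynomial (Fin n) K) (scalarExt K n m M) :=
  ⟨fun c r z => by
    induction z using TensorProduct.induction_on with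
    | zero => simp
    | tmul p x => rw [TensorProduct.smul_tmul', TensorProduct.smul_tmul', TensorProduct.smul_tmul',
        smul_assoc]
    | add y z hy hz => rw [smul_add, smul_add, smul_add, hy, hz]⟩

theorem auxPi_smul (c : K) (b : Fin m →₀ ℕ) (z : scalarExt K n m M) :
    auxPi K n m M b (c • z) = c • auxPi K n m M b z :=
  ((auxPi K n m M b).restrictScalars K).map_smul c z

theorem aux_repr (z : scalarExt K n m M) : ∃ f : (Fin m →₀ ℕ) →₀ M,
    z = f.sum fun b x => (monomial (auxUp n b) (1 : K)) ⊗ₜ[MvPolynomial (Fin n) K] x := by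
  classical
  have hadd : ∀ f g : (Fin m →₀ ℕ) →₀ M,
      ((f + g).sum fun b x => (monomial (auxUp n b) (1 : K)) ⊗ₜ[MvPolynomial (Fin n) K] x) =
      (f.sum fun b x => (monomial (auxUp n b) (1 : K)) ⊗ₜ[MvPolynomial (Fin n) K] x) +
      (g.sum fun b x => (monomial (auxUp n b) (1 : K)) ⊗ₜ[MvPolynomial (Fin n) K] x) := by
    intro f g
    exact Finsupp.sum_add_index' (fun b => TensorProduct.tmul_zero _ _)
      (fun b x y => TensorProduct.tmul_add _ _ _)
  induction z using TensorProduct.induction_on with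
  | zero => exact ⟨0, by simp⟩
  | add y z hy hz =>
    obtain ⟨f, rfl⟩ := hy
    obtain ⟨g, rfl⟩ := hz
    exact ⟨f + g, (hadd f g).symm⟩
  | tmul p x =>
    induction p using MvPolynomial.induction_on' with
    | monomial t c =>
      refine ⟨Finsupp.single (auxTl t) (monomial (auxHd t) c • x), ?_⟩
      rw [Finsupp.sum_single_index (h := fun b x => (monomial (auxUp n b) (1 : K)) ⊗ₜ[MvPolynomial (Fin n) K] x) (TensorProduct.tmul_zero _ _), aux_monomial_split,
        TensorProduct.smul_tmul]
    | add p q hp hq =>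
      obtain ⟨f, hf⟩ := hp
      obtain ⟨g, hg⟩ := hq
      exact ⟨f + g, by rw [hadd, TensorProduct.add_tmul, hf, hg]⟩

theorem auxTl_up (b : Fin m →₀ ℕ) : auxTl (auxUp n b) = b := by
  ext j
  simp [auxTl, auxUp_nat]

theorem auxHd_up (b : Fin m →₀ ℕ) : auxHd (auxUp n b) = 0 := by
  ext j
  simp [auxHd, auxUp_cast]

theorem auxPi_inj (z : scalarExt K n m M) (h : ∀ b, auxPi K n m M b z = 0) : z = 0 := by
  classical
  obtain ⟨f, rfl⟩ := aux_repr z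
  have : f = 0 := by
    ext b
    rw [Finsupp.coe_zero, Pi.zero_apply, ← h b, Finsupp.sum, map_sum]
    simp only [auxPi_tmul, auxCo_monomial, auxTl_up, auxHd_up]
    simp [ite_smul, ← MvPolynomial.C_apply]
  rw [this, Finsupp.sum_zero_index]

theorem auxPi_zero_smul (q : MvPolynomial (Fin (n + m)) K) (z : scalarExt K n m M) :
    auxPi K n m M 0 (q • z) = auxCo K n m 0 q • auxPi K n m M 0 z := by
  induction z using TensorProduct.induction_on with
  | zero => simp
  | tmul p x =>
    rw [TensorProduct.smul_tmul', auxPi_tmul, auxPi_tmul, smul_smul]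
    congr 1
    change constantCoeff (auxSig K n m (q * p)) =
      constantCoeff (auxSig K n m q) * constantCoeff (auxSig K n m p)
    rw [map_mul, map_mul]
  | add y z hy hz => rw [smul_add, map_add, map_add, smul_add, hy, hz]

theorem aux_iota_smul (q : MvPolynomial (Fin n) K) (x : M) :
    ((1 : MvPolynomial (Fin (n + m)) K) ⊗ₜ[MvPolynomial (Fin n) K] (q • x) : scalarExt K n m M)
      = rename (Fin.castAdd m) q • ((1 : MvPolynomial (Fin (n + m)) K) ⊗ₜ x) := by
  rw [TensorProduct.smul_tmul', ← TensorProduct.smul_tmul, Algebra.smul_def, aux_algebraMap]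
  rfl

theorem auxPi_iota (x : M) : auxPi K n m M 0 ((1 : MvPolynomial (Fin (n + m)) K) ⊗ₜ x) = x := by
  rw [auxPi_tmul]
  change constantCoeff (auxSig K n m 1) • x = x
  simp

theorem aux_slice (gr : (Fin n → ℤ) → Submodule K M) (hsmul : GradedSMul gr)
    (a' : Fin (n + m) → ℤ) (z : scalarExt K n m M) (hz : z ∈ extGrading K n m gr a') :
    auxPi K n m M 0 z ∈ gr (fun j => a' (Fin.castAdd m j)) ∧
    ((∀ j, a' (Fin.natAdd n j) = 0) →
      ((1 : MvPolynomial (Fin (n + m)) K) ⊗ₜ auxPi K n m M 0 z) = z) ∧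
    ((¬ ∀ j, a' (Fin.natAdd n j) = 0) → auxPi K n m M 0 z = 0) := by
  classical
  induction hz using Submodule.span_induction with
  | mem z hz =>
    obtain ⟨t, c, x, hx, h1, h2, rfl⟩ := hz
    have htl : auxTl t = 0 ↔ ∀ j, a' (Fin.natAdd n j) = 0 := by
      rw [Finsupp.ext_iff]
      refine forall_congr' fun j => ?_
      rw [← h2 j]
      simp [auxTl]
    rw [auxPi_tmul, auxCo_monomial]
    refine ⟨?_, ?_, ?_⟩
    · split_ifs
      · have := aux_mon_mem gr hsmul (auxHd t) c x hx
        convert this using 2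
        ext j
        rw [← h1 j]
        simp [auxHd]
      · rw [zero_smul]; exact zero_mem _
    · intro h
      rw [if_pos (htl.2 h), ← TensorProduct.smul_tmul]
      congr 1
      conv_rhs => rw [aux_monomial_split, htl.2 h]
      simp [auxUp]
    · intro h
      rw [if_neg (fun h' => h (htl.1 h')), zero_smul]
  | zero => simp
  | add y z _ _ hy hz =>
    refine ⟨?_, ?_, ?_⟩
    · rw [map_add]; exact add_mem hy.1 hz.1
    · intro h
      rw [map_add, TensorProduct.tmul_add, hy.2.1 h, hz.2.1 h]
    · intro h
      rw [map_add, hy.2.2 h, hz.2.2 h, add_zero]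
  | smul c y _ hy =>
    refine ⟨?_, ?_, ?_⟩
    · rw [auxPi_smul]; exact Submodule.smul_mem _ _ hy.1
    · intro h
      rw [auxPi_smul]
      conv_rhs => rw [← hy.2.1 h]
      exact ((TensorProduct.mk (MvPolynomial (Fin n) K) (MvPolynomial (Fin (n + m)) K) M
        1).restrictScalars K).map_smul c _
    · intro h
      rw [auxPi_smul, hy.2.2 h, smul_zero]

theorem aux_indep {ι β A B : Type*} [AddCommGroup A] [Module K A] [AddCommGroup B] [Module K B]
    (f : β → A →ₗ[K] B) (hf : ∀ x, (∀ b, f b x = 0) → x = 0)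
    (S : ι → Submodule K A) (T : ι → Submodule K B) (hT : iSupIndep T)
    (h : ∀ b i, S i ≤ (T i).comap (f b)) : iSupIndep S := by
  intro i
  rw [Submodule.disjoint_def]
  intro x hx hx'
  refine hf x fun b => ?_
  refine (Submodule.disjoint_def.1 (hT i)) _ (h b i hx) ?_
  have : (⨆ j, ⨆ (_ : j ≠ i), S j) ≤ (⨆ j, ⨆ (_ : j ≠ i), T j).comap (f b) :=
    iSup₂_le fun j hj => (h b j).trans
      (Submodule.comap_mono (le_iSup₂_of_le (f := fun j (_ : j ≠ i) => T j) j hj le_rfl))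
  exact this hx'

/-- extended set of variables -/
def auxZ (m : ℕ) (Z : Finset (Fin n)) : Finset (Fin (n + m)) :=
  Z.map (Fin.castAddEmb m) ∪ Finset.univ.map (Fin.natAddEmb n)

theorem auxZ_cast (Z : Finset (Fin n)) (j : Fin n) : Fin.castAdd m j ∈ auxZ m Z ↔ j ∈ Z := by
  simp only [auxZ, Finset.mem_union, Finset.mem_map, Finset.mem_univ, true_and]
  constructor
  · rintro (⟨i, hi, h⟩ | ⟨i, h⟩)
    · have := Fin.castAdd_injective _ _ h
      rwa [← this]
    · have := congrArg Fin.val h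
      simp at this
      omega
  · intro h
    exact Or.inl ⟨j, h, rfl⟩

theorem auxZ_nat (Z : Finset (Fin n)) (j : Fin m) : Fin.natAdd n j ∈ auxZ m Z := by
  simp only [auxZ, Finset.mem_union, Finset.mem_map, Finset.mem_univ, true_and]
  exact Or.inr ⟨j, rfl⟩

theorem auxZ_card (Z : Finset (Fin n)) : (auxZ m Z).card = Z.card + m := by
  rw [auxZ, Finset.card_union_of_disjoint, Finset.card_map, Finset.card_map, Finset.card_fin]
  rw [Finset.disjoint_left]
  intro a ha hb
  obtain ⟨i, _, rfl⟩ := Finset.mem_map.1 ha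
  obtain ⟨j, _, h⟩ := Finset.mem_map.1 hb
  have := congrArg Fin.val h
  simp at this
  omega

theorem aux_up (gr : (Fin n → ℤ) → Submodule K M) {ι : Type} [Fintype ι]
    (Z : ι → Finset (Fin n)) (s : ι → Fin n → ℤ) (e : ι → M) (h : IsStanleyDecomp gr Z s e) :
    IsStanleyDecomp (extGrading K n m gr) (fun i => auxZ m (Z i))
      (fun i => Fin.append (s i) 0)
      (fun i => (1 : MvPolynomial (Fin (n + m)) K) ⊗ₜ[MvPolynomial (Fin n) K] e i) := by
  classical
  obtain ⟨h1, h2, h3, h4⟩ := h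
  have hpi : ∀ (b : Fin m →₀ ℕ) (q : MvPolynomial (Fin (n + m)) K) (x : M),
      auxPi K n m M b (q • ((1 : MvPolynomial (Fin (n + m)) K) ⊗ₜ x)) = auxCo K n m b q • x := by
    intro b q x
    rw [TensorProduct.smul_tmul', auxPi_tmul, smul_eq_mul, mul_one]
  refine ⟨?_, ?_, ?_, ?_⟩
  · intro i
    refine Submodule.subset_span ⟨0, s i, e i, h1 i, ?_, ?_, rfl⟩
    · intro j; simp
    · intro j; simp
  · intro i q hq h0
    apply auxSig_inj
    ext1 b
    rw [coeff_zero]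
    change auxCo K n m b q = 0
    refine h2 i _ (auxCo_supp b _ _ (fun j hj => ?_) q hq) ?_
    · exact (auxZ_cast (Z i) j).1 hj
    · rw [← hpi, h0, map_zero]
  · refine aux_indep (fun b => (auxPi K n m M b).restrictScalars K) auxPi_inj _ _ h3 ?_
    intro b i
    refine Submodule.span_le.2 ?_
    rintro _ ⟨t, ht, rfl⟩
    change auxPi K n m M b _ ∈ stanleySpace K (e i) (Z i)
    rw [hpi, auxCo_monomial]
    split_ifs
    · refine Submodule.subset_span ⟨auxHd t, fun j hj => ?_, rfl⟩
      exact ht _ (fun h => hj ((auxZ_cast (Z i) j).1 h))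
    · rw [zero_smul]; exact zero_mem _
  · rw [eq_top_iff]
    intro z _
    obtain ⟨f, rfl⟩ := aux_repr z
    refine Submodule.sum_mem _ fun b _ => ?_
    have key : (⊤ : Submodule K M) ≤ Submodule.comap
        ((TensorProduct.mk (MvPolynomial (Fin n) K) (MvPolynomial (Fin (n + m)) K) M
          (monomial (auxUp n b) 1)).restrictScalars K)
        (⨆ i, stanleySpace K ((1 : MvPolynomial (Fin (n + m)) K) ⊗ₜ[MvPolynomial (Fin n) K] e i :
          scalarExt K n m M) (auxZ m (Z i))) := by
      rw [← h4]
      refine iSup_le fun i => ?_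
      refine Submodule.span_le.2 ?_
      rintro _ ⟨u, hu, rfl⟩
      refine Submodule.mem_iSup_of_mem i ?_
      refine Submodule.subset_span ⟨auxLf m u + auxUp n b, ?_, ?_⟩
      · intro j
        refine Fin.addCases (fun j => ?_) (fun j => ?_) j
        · intro hj
          have := hu j (fun h => hj ((auxZ_cast (Z i) j).2 h))
          simp [auxLf_cast, auxUp_cast, this]
        · intro hj
          exact absurd (auxZ_nat (Z i) j) hj
      · change _ = (monomial (auxUp n b) (1 : K)) ⊗ₜ[MvPolynomial (Fin n) K]
          ((monomial u (1 : K)) • e i)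
        rw [← TensorProduct.smul_tmul, Algebra.smul_def, aux_algebraMap, rename_monomial,
          monomial_mul]
        change monomial (auxLf m u + auxUp n b) (1 : K) • _ = _
        rw [TensorProduct.smul_tmul', smul_eq_mul, mul_one, mul_one]
        rfl
    exact key (x := f b) trivial

theorem aux_down [Nontrivial M] (gr : (Fin n → ℤ) → Submodule K M) (hsmul : GradedSMul gr)
    {ι : Type} [Fintype ι]
    (Z : ι → Finset (Fin (n + m))) (s : ι → Fin (n + m) → ℤ) (e : ι → scalarExt K n m M)
    (h : IsStanleyDecomp (extGrading K n m gr) Z s e) :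
    ∃ (κ : Type) (_ : Fintype κ) (_ : Nonempty κ) (Z' : κ → Finset (Fin n)) (s' : κ → Fin n → ℤ)
      (e' : κ → M), IsStanleyDecomp gr Z' s' e' ∧ ∀ k, ∃ i, (Z i).card ≤ (Z' k).card + m := by
  classical
  obtain ⟨h1, h2, h3, h4⟩ := h
  let κ := {i : ι // ∀ j, s i (Fin.natAdd n j) = 0}
  let Z' : κ → Finset (Fin n) := fun k => Finset.univ.filter fun j => Fin.castAdd m j ∈ Z k.1
  let e' : κ → M := fun k => auxPi K n m M 0 (e k.1)
  have he : ∀ k : κ, ((1 : MvPolynomial (Fin (n + m)) K) ⊗ₜ[MvPolynomial (Fin n) K] e' k) = e k.1 :=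
    fun k => (aux_slice gr hsmul _ _ (h1 k.1)).2.1 k.2
  have hspan : (⨆ k, stanleySpace K (e' k) (Z' k)) = ⊤ := by
    rw [eq_top_iff]
    intro x _
    have key : (⊤ : Submodule K (scalarExt K n m M)) ≤ Submodule.comap
        ((auxPi K n m M 0).restrictScalars K) (⨆ k, stanleySpace K (e' k) (Z' k)) := by
      rw [← h4]
      refine iSup_le fun i => ?_
      refine Submodule.span_le.2 ?_
      rintro _ ⟨t, ht, rfl⟩
      change auxPi K n m M 0 _ ∈ ⨆ k, stanleySpace K (e' k) (Z' k)
      rw [auxPi_zero_smul, auxCo_monomial]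
      by_cases hi : ∀ j, s i (Fin.natAdd n j) = 0
      · split_ifs
        · refine Submodule.mem_iSup_of_mem ⟨i, hi⟩ (Submodule.subset_span ⟨auxHd t, ?_, rfl⟩)
          intro j hj
          refine ht _ fun h => hj ?_
          simpa [Z'] using h
        · rw [zero_smul]; exact zero_mem _
      · rw [(aux_slice gr hsmul _ _ (h1 i)).2.2 hi, smul_zero]; exact zero_mem _
    have := key (x := (1 : MvPolynomial (Fin (n + m)) K) ⊗ₜ x) trivial
    change auxPi K n m M 0 _ ∈ ⨆ k, stanleySpace K (e' k) (Z' k) at this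
    rwa [auxPi_iota] at this
  refine ⟨κ, inferInstance, ?_, Z', fun k j => s k.1 (Fin.castAdd m j), e',
    ⟨?_, ?_, ?_, hspan⟩, ?_⟩
  · by_contra hne
    rw [not_nonempty_iff] at hne
    rw [iSup_of_empty] at hspan
    exact bot_ne_top hspan
  · intro k
    exact (aux_slice gr hsmul _ _ (h1 k.1)).1
  · intro k q hq h0
    have h5 := aux_iota_smul (m := m) q (e' k)
    rw [h0, he, TensorProduct.tmul_zero] at h5
    have h6 := h2 k.1 _ (by
      rw [mem_supported]
      refine fun j hj => ?_
      have := vars_rename (Fin.castAdd m) q hj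
      obtain ⟨i, hi, rfl⟩ := Finset.mem_image.1 this
      have := mem_supported.1 hq hi
      simpa [Z'] using this) h5.symm
    exact rename_injective _ (Fin.castAdd_injective _ _) (by rw [h6, map_zero])
  · refine aux_indep (fun _ : Unit => (TensorProduct.mk (MvPolynomial (Fin n) K)
      (MvPolynomial (Fin (n + m)) K) M 1).restrictScalars K) ?_ _ _
      (h3.comp (f := fun k : κ => k.1) Subtype.val_injective) ?_
    · intro x hx
      rw [← auxPi_iota (K := K) (n := n) (m := m) x]
      have := hx ()
      change (1 : MvPolynomial (Fin (n + m)) K) ⊗ₜ[MvPolynomial (Fin n) K] x = 0 at this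
      rw [this, map_zero]
    · intro _ k
      refine Submodule.span_le.2 ?_
      rintro _ ⟨t, ht, rfl⟩
      change (1 : MvPolynomial (Fin (n + m)) K) ⊗ₜ[MvPolynomial (Fin n) K] (monomial t (1 : K) • e' k)
        ∈ stanleySpace K (e k.1) (Z k.1)
      rw [aux_iota_smul, he, rename_monomial]
      refine Submodule.subset_span ⟨auxLf m t, ?_, rfl⟩
      intro j
      refine Fin.addCases (fun j => ?_) (fun j => ?_) j
      · intro hj
        rw [auxLf_cast]
        exact ht j (fun h => hj (by simpa [Z'] using h))
      · intro _
        exact auxLf_nat _ _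
  · intro k
    refine ⟨k.1, ?_⟩
    rw [← auxZ_card]
    refine Finset.card_le_card ?_
    intro j
    refine Fin.addCases (fun j => ?_) (fun j => ?_) j
    · intro hj
      rw [auxZ_cast]
      simpa [Z'] using hj
    · intro _
      exact auxZ_nat _ _

end tensor

/-- **Proposition.**  Let `M` be a finitely generated multigraded module over
`R = K[X₁,…,Xₙ]` and `M' = M ⊗_K K[X_{n+1},…,X_{n+m}]` (with its `ℤ^{n+m}`-grading)
the module over `R' = K[X₁,…,X_{n+m}]` obtained by scalar extension.  Then
`Stdepth_{R'} M' = Stdepth_R M + m`. -/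
theorem stdepth_scalarExtension
    {K : Type*} [Field K] {n m : ℕ}
    (M : Type*) [AddCommGroup M] [Module K M]
    [Module (MvPolynomial (Fin n) K) M]
    [IsScalarTower K (MvPolynomial (Fin n) K) M]
    [Module.Finite (MvPolynomial (Fin n) K) M] [Nontrivial M]
    (gr : (Fin n → ℤ) → Submodule K M) [DirectSum.Decomposition gr]
    (hsmul : GradedSMul gr) :
    stdepth (extGrading K n m gr) = stdepth gr + m := by
  have hA := aux_bdd gr
  have hA' := aux_bdd (extGrading K n m gr)
  have hne : Set.Nonempty {d | ∃ (k : ℕ) (Z : Fin (k + 1) → Finset (Fin n))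
      (s : Fin (k + 1) → Fin n → ℤ) (m : Fin (k + 1) → M), IsStanleyDecomp gr Z s m ∧
      d = Finset.univ.inf' Finset.univ_nonempty fun i => (Z i).card} := by
    obtain ⟨-, ι, hι, Z, s, e, h1, h2, h3, h4⟩ := aux_exists gr hsmul
    have hn : Nonempty ι := by
      by_contra hne
      rw [not_nonempty_iff] at hne
      rw [iSup_of_empty] at h4
      exact bot_ne_top (α := Submodule K M) h4
    obtain ⟨d, hd, -⟩ := aux_mem_set gr Z s e ⟨h1, h2, h3, h4⟩
    exact ⟨d, hd⟩
  apply le_antisymm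
  · refine csSup_le' ?_
    rintro _ ⟨k, Z, s, e, h, rfl⟩
    obtain ⟨κ, _, _, Z', s', e', hd, hc⟩ := aux_down gr hsmul Z s e h
    obtain ⟨d, hd1, hd2⟩ := aux_mem_set gr Z' s' e' hd
    have h1 : d ≤ stdepth gr := le_csSup hA hd1
    have h2 := hd2 ((Finset.univ.inf' Finset.univ_nonempty fun i => (Z i).card) - m) (fun i => by
      obtain ⟨j, hj⟩ := hc i
      have := Finset.inf'_le (fun i => (Z i).card) (Finset.mem_univ j)
      omega)
    omega
  · obtain ⟨k, Z, s, e, h, hd⟩ := Nat.sSup_mem hne hA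
    obtain ⟨d, hd1, hd2⟩ := aux_mem_set _ _ _ _ (aux_up (m := m) gr Z s e h)
    have h1 : d ≤ stdepth (extGrading K n m gr) := le_csSup hA' hd1
    refine le_trans (hd2 _ fun i => ?_) h1
    rw [auxZ_card]
    refine Nat.add_le_add_right ?_ m
    change sSup _ ≤ _
    rw [hd]
    exact Finset.inf'_le (fun i => (Z i).card) (Finset.mem_univ i)
end
end
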